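/- Let a ∈ ℝ and let h, u be real C² functions on B₁* with Δh = 0 and Δu = ((∂h/∂x + a·y/|z|²)² + (∂h/∂y − a·x/|z|²)²)·e^{2u}, such that the holomorphic function F(z) := ∂h/∂x − i·∂h/∂y has finite order N at 0; set n := N if a = 0 and n := min(−1, N) otherwise. Suppose either (i) there are β < n+1 and c with u(z) + β·log|z| → c as z → 0, or (ii) u(z) + (n+1)·log|z| + log|log|z|| converges as z → 0, in which case set β := n+1. Let ω_∇ = M_r dr + M_θ dθ be the connection form determined by (h,u,a), and for r ∈ (0,1) let Φ_r : [0,2π] → M₂(ℝ) solve Φ_r'(s) = −M_θ(r e^{is})·Φ_r(s), Φ_r(0) = 𝟙. Then for every r ∈ (0,1) the trace of the holonomy matrix Φ_r(2π) equals 2·cos(πβ). -/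

import Mathlib

open Complex Real Set Topology Filter Matrix

/-- Partial derivative in the `x`-direction of a function on `ℂ ≅ ℝ²`. -/
noncomputable def pdx (f : ℂ → ℝ) (z : ℂ) : ℝ := deriv (fun t : ℝ => f (z + t)) 0

/-- Partial derivative in the `y`-direction. -/
noncomputable def pdy (f : ℂ → ℝ) (z : ℂ) : ℝ := deriv (fun t : ℝ => f (z + t * Complex.I)) 0

/-- The flat Laplacian `Δ = ∂²/∂x² + ∂²/∂y²`. -/
noncomputable def lap (f : ℂ → ℝ) (z : ℂ) : ℝ := pdx (pdx f) z + pdy (pdy f) z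

/-- The punctured open unit disc `B₁* = {0 < |z| < 1}`. -/
def PDisc : Set ℂ := {z : ℂ | 0 < ‖z‖ ∧ ‖z‖ < 1}

/-- Radial derivative `∂f/∂r` expressed in Cartesian coordinates. -/
noncomputable def pdr (f : ℂ → ℝ) (z : ℂ) : ℝ :=
  (z.re * pdx f z + z.im * pdy f z) / ‖z‖

/-- Angular derivative `∂f/∂θ` expressed in Cartesian coordinates. -/
noncomputable def pdθ (f : ℂ → ℝ) (z : ℂ) : ℝ :=
  -z.im * pdx f z + z.re * pdy f z

/-- `ω₁₁(∂_r)` where `2ω₁₁ = e^u (dh − a dθ) − du`. -/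
noncomputable def ω11r (h u : ℂ → ℝ) (a : ℝ) (z : ℂ) : ℝ :=
  (Real.exp (u z) * pdr h z - pdr u z) / 2

/-- `ω₁₁(∂_θ)`. -/
noncomputable def ω11θ (h u : ℂ → ℝ) (a : ℝ) (z : ℂ) : ℝ :=
  (Real.exp (u z) * (pdθ h z - a) - pdθ u z) / 2

/-- `ω₂₂(∂_r)` where `2ω₂₂ = −e^u (dh − a dθ) − du`. -/
noncomputable def ω22r (h u : ℂ → ℝ) (a : ℝ) (z : ℂ) : ℝ :=
  -(Real.exp (u z) * pdr h z + pdr u z) / 2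

/-- `ω₂₂(∂_θ)`. -/
noncomputable def ω22θ (h u : ℂ → ℝ) (a : ℝ) (z : ℂ) : ℝ :=
  -(Real.exp (u z) * (pdθ h z - a) + pdθ u z) / 2

/-- The `dθ`-component `M_θ` of the connection form `ω_∇ = M_r dr + M_θ dθ`. -/
noncomputable def Mθ (h u : ℂ → ℝ) (a : ℝ) (z : ℂ) : Matrix (Fin 2) (Fin 2) ℝ :=
  !![ω11θ h u a z, -‖z‖ * ω11r h u a z;
     ‖z‖ * ω22r h u a z, ω22θ h u a z]

/-- The `dr`-component `M_r` of the connection form. -/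
noncomputable def Mr (h u : ℂ → ℝ) (a : ℝ) (z : ℂ) : Matrix (Fin 2) (Fin 2) ℝ :=
  !![ω11r h u a z, ω11θ h u a z / ‖z‖;
     -ω22θ h u a z / ‖z‖, ω22r h u a z]


section ode
variable {𝔸 : Type*} [NormedRing 𝔸] [NormedAlgebra ℝ 𝔸]

theorem aux_gronwall {D D' : ℝ → 𝔸} {K ε T : ℝ} (hD : ∀ s, HasDerivAt D (D' s) s)
    (h0 : D 0 = 0) (hT : 0 ≤ T)
    (hb : ∀ s ∈ Icc 0 T, ‖D' s‖ ≤ K * ‖D s‖ + ε) :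
    ‖D T‖ ≤ gronwallBound 0 K ε T := by
  have := norm_le_gronwallBound_of_norm_deriv_right_le (f := D) (f' := D') (δ := 0) (K := K)
    (ε := ε) (a := 0) (b := T) (fun x _ => (hD x).continuousAt.continuousWithinAt)
    (fun x _ => (hD x).hasDerivWithinAt) (by simp [h0])
    (fun x hx => hb x ⟨hx.1, hx.2.le⟩) T ⟨hT, le_rfl⟩
  simpa using this

theorem aux_gronwall' {K ε T : ℝ} (hK : 0 < K) :
    gronwallBound 0 K ε T = ε * ((Real.exp (K * T) - 1) / K) := by
  rw [gronwallBound_of_K_ne_0 hK.ne']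
  ring

/-- Convergence of the transport when coefficients converge uniformly. -/
theorem aux_limit (Φ L : ℝ → ℝ → 𝔸) (Ψ : ℝ → 𝔸) (L₀ : 𝔸) (T : ℝ) (hT : 0 ≤ T)
    (hΦ0 : ∀ ρ < 0, Φ ρ 0 = 1)
    (hΦ : ∀ ρ < 0, ∀ s, HasDerivAt (Φ ρ) (L ρ s * Φ ρ s) s)
    (hΨ0 : Ψ 0 = 1) (hΨ : ∀ s, HasDerivAt Ψ (L₀ * Ψ s) s)
    (hL : ∀ ε > 0, ∃ ρ₀ < 0, ∀ ρ ≤ ρ₀, ∀ s, ‖L ρ s - L₀‖ ≤ ε) :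
    ∀ ε > 0, ∃ ρ₀ < 0, ∀ ρ ≤ ρ₀, ‖Φ ρ T - Ψ T‖ ≤ ε := by
  intro ε hε
  have hΨc : Continuous Ψ := continuous_iff_continuousAt.2 fun s => (hΨ s).continuousAt
  obtain ⟨B, hB⟩ := (isCompact_Icc (a := (0:ℝ)) (b := T)).exists_bound_of_continuousOn
    hΨc.continuousOn
  have hB0 : 0 ≤ B := (norm_nonneg _).trans (hB 0 ⟨le_rfl, hT⟩)
  set K : ℝ := ‖L₀‖ + 1 with hKdef
  have hK : 0 < K := by positivity
  set C : ℝ := (Real.exp (K * T) - 1) / K with hC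
  have hC0 : 0 ≤ C := by
    apply div_nonneg _ hK.le
    have : 1 ≤ Real.exp (K * T) := Real.one_le_exp (by positivity)
    linarith
  set δ : ℝ := min 1 (ε / ((B + 1) * (C + 1))) with hδ
  have hδ0 : 0 < δ := by positivity
  obtain ⟨ρ₀, h0, h⟩ := hL δ hδ0
  refine ⟨ρ₀, h0, fun ρ hρ => ?_⟩
  have hρ0 : ρ < 0 := by linarith
  have := aux_gronwall (D := fun s => Φ ρ s - Ψ s)
    (D' := fun s => L ρ s * Φ ρ s - L₀ * Ψ s) (K := K) (ε := δ * B) (T := T)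
    (fun s => (hΦ ρ hρ0 s).sub (hΨ s)) (by simp [hΦ0 ρ hρ0, hΨ0]) hT (by
      intro s hs
      have e : L ρ s * Φ ρ s - L₀ * Ψ s = L ρ s * (Φ ρ s - Ψ s) + (L ρ s - L₀) * Ψ s := by
        noncomm_ring
      have h1 : ‖L ρ s‖ ≤ K := by
        have : L ρ s = L₀ + (L ρ s - L₀) := by abel
        rw [this]
        refine (norm_add_le _ _).trans ?_
        have := (h ρ hρ s).trans (min_le_left _ _)
        linarith
      show ‖L ρ s * Φ ρ s - L₀ * Ψ s‖ ≤ _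
      rw [e]
      refine (norm_add_le _ _).trans (add_le_add ?_ ?_)
      · exact (norm_mul_le _ _).trans (by gcongr)
      · exact (norm_mul_le _ _).trans (by
          gcongr
          · exact h ρ hρ s
          · exact hB s hs))
  refine this.trans ?_
  rw [aux_gronwall' hK, ← hC]
  have h2 : δ ≤ ε / ((B + 1) * (C + 1)) := min_le_right _ _
  rw [le_div_iff₀ (by positivity)] at h2
  calc δ * B * C = δ * (B * C) := by ring
    _ ≤ δ * ((B + 1) * (C + 1)) := by
      gcongr <;> linarith
    _ ≤ ε := h2

/-- Uniform differentiability. -/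
theorem aux_unif (L L' : ℝ → ℝ → 𝔸) (T : ℝ) (ρ₀ : ℝ) (hρ₀ : ρ₀ < 0)
    (hL : ∀ ρ < 0, ∀ s, HasDerivAt (fun ρ => L ρ s) (L' ρ s) ρ)
    (hL'c : ContinuousOn (fun p : ℝ × ℝ => L' p.1 p.2) {p | p.1 < 0}) :
    ∀ ε > 0, ∃ δ > 0, ∀ ρ, |ρ - ρ₀| ≤ δ → ρ < 0 ∧ ∀ s ∈ Icc 0 T,
      ‖L ρ s - L ρ₀ s - (ρ - ρ₀) • L' ρ₀ s‖ ≤ ε * |ρ - ρ₀| := by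
  intro ε hε
  set d := -ρ₀ / 2 with hd
  have hd0 : 0 < d := by linarith
  have hcomp : IsCompact (Icc (ρ₀ - d) (ρ₀ + d) ×ˢ Icc 0 T) := isCompact_Icc.prod isCompact_Icc
  have huc := hcomp.uniformContinuousOn_of_continuous (hL'c.mono (by
    rintro ⟨x, y⟩ ⟨hx, hy⟩
    have : x ≤ ρ₀ + d := hx.2
    show x < 0
    linarith))
  rw [Metric.uniformContinuousOn_iff] at huc
  obtain ⟨δ, hδ, H⟩ := huc ε hε
  refine ⟨min d (δ / 2), by positivity, fun ρ hρ => ?_⟩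
  have h1 : |ρ - ρ₀| ≤ d := hρ.trans (min_le_left _ _)
  have h2 : |ρ - ρ₀| ≤ δ / 2 := hρ.trans (min_le_right _ _)
  refine ⟨by linarith [(abs_le.1 h1).2], fun s hs => ?_⟩
  have key := (convex_uIcc ρ₀ ρ).norm_image_sub_le_of_norm_hasDerivWithin_le
    (f := fun x => L x s - (x - ρ₀) • L' ρ₀ s) (f' := fun x => L' x s - L' ρ₀ s) (C := ε)
    (x := ρ₀) (y := ρ) (s := uIcc ρ₀ ρ) ?_ ?_ left_mem_uIcc right_mem_uIcc
  · simp only [sub_self, zero_smul, sub_zero] at key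
    rw [Real.norm_eq_abs] at key
    refine le_trans (le_of_eq ?_) key
    congr 1
    abel_nf
  · intro x hx
    have hx1 : |x - ρ₀| ≤ |ρ - ρ₀| := abs_sub_left_of_mem_uIcc hx
    have hx0 : x < 0 := by linarith [(abs_le.1 (hx1.trans h1)).2]
    have := (((hasDerivAt_id x).sub_const ρ₀).smul_const (L' ρ₀ s))
    simp only [one_smul, id] at this
    exact ((hL x hx0 s).sub this).hasDerivWithinAt
  · intro x hx
    have hx1 : |x - ρ₀| ≤ |ρ - ρ₀| := abs_sub_left_of_mem_uIcc hx
    have := abs_le.1 (hx1.trans h1)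
    have := H (x, s) ⟨⟨by linarith, by linarith⟩, hs⟩ (ρ₀, s) ⟨⟨by linarith, by linarith⟩, hs⟩ (by
      rw [Prod.dist_eq]; simp [Real.dist_eq]
      linarith)
    rw [dist_eq_norm] at this
    exact this.le

theorem aux_transport (Φ L L' R R' : ℝ → ℝ → 𝔸) (T : ℝ) (hT : 0 ≤ T)
    (hΦ0 : ∀ ρ < 0, Φ ρ 0 = 1)
    (hΦ : ∀ ρ < 0, ∀ s, HasDerivAt (Φ ρ) (L ρ s * Φ ρ s) s)
    (hL : ∀ ρ < 0, ∀ s, HasDerivAt (fun ρ => L ρ s) (L' ρ s) ρ)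
    (hR : ∀ ρ < 0, ∀ s, HasDerivAt (R ρ) (R' ρ s) s)
    (hL'c : ContinuousOn (fun p : ℝ × ℝ => L' p.1 p.2) {p | p.1 < 0})
    (hLc : ∀ ρ < 0, Continuous (L ρ))
    (hflat : ∀ ρ < 0, ∀ s, L' ρ s + L ρ s * R ρ s = R' ρ s + R ρ s * L ρ s)
    (ρ₀ : ℝ) (hρ₀ : ρ₀ < 0) :
    HasDerivAt (fun ρ => Φ ρ T) (R ρ₀ T * Φ ρ₀ T - Φ ρ₀ T * R ρ₀ 0) ρ₀ := by
  set E : ℝ → 𝔸 := fun s => R ρ₀ s * Φ ρ₀ s - Φ ρ₀ s * R ρ₀ 0 with hE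
  have hE' : ∀ s, HasDerivAt E (L ρ₀ s * E s + L' ρ₀ s * Φ ρ₀ s) s := by
    intro s
    have := ((hR ρ₀ hρ₀ s).mul (hΦ ρ₀ hρ₀ s)).sub ((hΦ ρ₀ hρ₀ s).mul_const (R ρ₀ 0))
    refine this.congr_deriv ?_
    have e := hflat ρ₀ hρ₀ s
    have e2 : R' ρ₀ s = L' ρ₀ s + L ρ₀ s * R ρ₀ s - R ρ₀ s * L ρ₀ s := by
      rw [e]; abel
    rw [e2]
    simp only [hE]
    noncomm_ring
  have bd : ∀ f : ℝ → 𝔸, Continuous f → ∃ B, 0 ≤ B ∧ ∀ s ∈ Icc 0 T, ‖f s‖ ≤ B := by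
    intro f hf
    obtain ⟨B, hB⟩ := (isCompact_Icc (a := (0:ℝ)) (b := T)).exists_bound_of_continuousOn
      hf.continuousOn
    exact ⟨B, (norm_nonneg _).trans (hB 0 ⟨le_rfl, hT⟩), hB⟩
  obtain ⟨BΦ, hBΦ0, hBΦ⟩ := bd (Φ ρ₀) (continuous_iff_continuousAt.2 fun s =>
    (hΦ ρ₀ hρ₀ s).continuousAt)
  obtain ⟨BE, hBE0, hBE⟩ := bd E (continuous_iff_continuousAt.2 fun s => (hE' s).continuousAt)
  obtain ⟨BL, hBL0, hBL⟩ := bd (L ρ₀) (hLc ρ₀ hρ₀)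
  obtain ⟨BL', hBL'0, hBL'⟩ := bd (L' ρ₀) (by
    rw [← continuousOn_univ]
    exact hL'c.comp (f := fun s : ℝ => (ρ₀, s)) (by fun_prop) (fun s _ => hρ₀))
  rw [hasDerivAt_iff_isLittleO, Asymptotics.isLittleO_iff]
  intro c hc
  set K : ℝ := BL + 1 with hKdef
  have hK : 0 < K := by positivity
  set C : ℝ := (Real.exp (K * T) - 1) / K with hC
  have hC0 : 0 ≤ C := by
    apply div_nonneg _ hK.le
    have : 1 ≤ Real.exp (K * T) := Real.one_le_exp (by positivity)
    linarith
  set ε : ℝ := min 1 (c / ((BΦ + BE + 1) * (C + 1))) with hε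
  have hε0 : 0 < ε := by positivity
  obtain ⟨δ, hδ, H⟩ := aux_unif L L' T ρ₀ hρ₀ hL hL'c ε hε0
  set δ' : ℝ := min δ (ε / (1 + BL')) with hδ'
  have hδ'0 : 0 < δ' := by positivity
  filter_upwards [Metric.closedBall_mem_nhds ρ₀ hδ'0] with ρ hρ
  rw [Metric.mem_closedBall, Real.dist_eq] at hρ
  obtain ⟨hρ0, HH⟩ := H ρ (hρ.trans (min_le_left _ _))
  have hsmall : |ρ - ρ₀| * (1 + BL') ≤ ε := by
    have := hρ.trans (min_le_right _ _)
    rwa [le_div_iff₀ (by positivity)] at this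
  have hε1 : ε ≤ 1 := min_le_left _ _
  have hdiff : ∀ s ∈ Icc 0 T, ‖L ρ s - L ρ₀ s‖ ≤ ε := by
    intro s hs
    have : L ρ s - L ρ₀ s = (L ρ s - L ρ₀ s - (ρ - ρ₀) • L' ρ₀ s) + (ρ - ρ₀) • L' ρ₀ s := by abel
    rw [this]
    refine (norm_add_le _ _).trans ?_
    have h1 := HH s hs
    have h2 : ‖(ρ - ρ₀) • L' ρ₀ s‖ ≤ |ρ - ρ₀| * BL' := by
      rw [norm_smul, Real.norm_eq_abs]
      gcongr
      exact hBL' s hs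
    nlinarith [abs_nonneg (ρ - ρ₀)]
  have := aux_gronwall (D := fun s => Φ ρ s - Φ ρ₀ s - (ρ - ρ₀) • E s)
    (D' := fun s => L ρ s * Φ ρ s - L ρ₀ s * Φ ρ₀ s
      - (ρ - ρ₀) • (L ρ₀ s * E s + L' ρ₀ s * Φ ρ₀ s)) (K := K)
      (ε := ε * |ρ - ρ₀| * (BΦ + BE)) (T := T)
    (fun s => ((hΦ ρ hρ0 s).sub (hΦ ρ₀ hρ₀ s)).sub ((hE' s).const_smul (ρ - ρ₀)))
    (by simp [hΦ0 ρ hρ0, hΦ0 ρ₀ hρ₀, hE]) hT (by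
      intro s hs
      have e : L ρ s * Φ ρ s - L ρ₀ s * Φ ρ₀ s
          - (ρ - ρ₀) • (L ρ₀ s * E s + L' ρ₀ s * Φ ρ₀ s)
          = L ρ s * (Φ ρ s - Φ ρ₀ s - (ρ - ρ₀) • E s)
            + ((L ρ s - L ρ₀ s - (ρ - ρ₀) • L' ρ₀ s) * Φ ρ₀ s
              + (ρ - ρ₀) • ((L ρ s - L ρ₀ s) * E s)) := by
        simp only [mul_sub, sub_mul, smul_add, smul_sub, mul_smul_comm, smul_mul_assoc]
        abel
      have h1 : ‖L ρ s‖ ≤ K := by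
        have : L ρ s = L ρ₀ s + (L ρ s - L ρ₀ s) := by abel
        rw [this]
        refine (norm_add_le _ _).trans ?_
        linarith [hdiff s hs, hBL s hs]
      show ‖L ρ s * Φ ρ s - L ρ₀ s * Φ ρ₀ s
          - (ρ - ρ₀) • (L ρ₀ s * E s + L' ρ₀ s * Φ ρ₀ s)‖ ≤ _
      rw [e]
      refine (norm_add_le _ _).trans (add_le_add ?_ ?_)
      · exact (norm_mul_le _ _).trans (by gcongr)
      · rw [mul_add]
        refine (norm_add_le _ _).trans (add_le_add ?_ ?_)
        · exact (norm_mul_le _ _).trans (by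
            gcongr
            · exact HH s hs
            · exact hBΦ s hs)
        · rw [norm_smul, Real.norm_eq_abs]
          calc |ρ - ρ₀| * ‖(L ρ s - L ρ₀ s) * E s‖ ≤ |ρ - ρ₀| * (ε * BE) := by
                gcongr
                exact (norm_mul_le _ _).trans (by
                  gcongr
                  · exact hdiff s hs
                  · exact hBE s hs)
            _ = ε * |ρ - ρ₀| * BE := by ring)
  refine this.trans ?_
  rw [aux_gronwall' hK, ← hC, Real.norm_eq_abs]
  have h2 : ε ≤ c / ((BΦ + BE + 1) * (C + 1)) := min_le_right _ _
  rw [le_div_iff₀ (by positivity)] at h2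
  calc ε * |ρ - ρ₀| * (BΦ + BE) * C = (ε * ((BΦ + BE) * C)) * |ρ - ρ₀| := by ring
    _ ≤ (ε * ((BΦ + BE + 1) * (C + 1))) * |ρ - ρ₀| := by
      have : (BΦ + BE) * C ≤ (BΦ + BE + 1) * (C + 1) :=
        mul_le_mul (by linarith) (by linarith) hC0 (by linarith)
      gcongr
    _ ≤ c * |ρ - ρ₀| := by gcongr

end ode

section gradient

theorem aux_localMin {f f' : ℝ → ℝ} {x c : ℝ} (hmin : IsLocalMin f x)
    (hf : ∀ᶠ t in 𝓝 x, HasDerivAt f (f' t) t) (hf' : HasDerivAt f' c x) : 0 ≤ c := by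
  by_contra hc
  push Not at hc
  have e1 : deriv f =ᶠ[𝓝 x] f' := hf.mono fun t ht => ht.deriv
  have e2 : deriv (deriv f) x = c := by rw [e1.deriv_eq, hf'.deriv]
  have hmax : IsLocalMax f x := isLocalMax_of_deriv_deriv_neg (by rw [e2]; exact hc)
    hmin.deriv_eq_zero hf.self_of_nhds.continuousAt
  have heq : f =ᶠ[𝓝 x] fun _ => f x := by
    filter_upwards [hmin, hmax] with t h1 h2
    exact le_antisymm h2 h1
  have e3 : deriv (deriv f) x = 0 := by
    have : deriv f =ᶠ[𝓝 x] fun _ => 0 := by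
      filter_upwards [heq.eventuallyEq_nhds] with t ht
      rw [ht.deriv_eq]; simp
    rw [this.deriv_eq]; simp
  linarith

theorem aux_maxprinciple (ψ ψx ψy ψxx ψyy : ℝ → ℝ → ℝ)
    (hc : ContinuousOn (fun p : ℝ × ℝ => ψ p.1 p.2) (Icc (-1) 1 ×ˢ Icc 0 1))
    (hx : ∀ x ∈ Ioo (-1 : ℝ) 1, ∀ y ∈ Ioo (0 : ℝ) 1, HasDerivAt (fun t => ψ t y) (ψx x y) x)
    (hxx : ∀ x ∈ Ioo (-1 : ℝ) 1, ∀ y ∈ Ioo (0 : ℝ) 1, HasDerivAt (fun t => ψx t y) (ψxx x y) x)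
    (hy : ∀ x ∈ Ioo (-1 : ℝ) 1, ∀ y ∈ Ioo (0 : ℝ) 1, HasDerivAt (fun t => ψ x t) (ψy x y) y)
    (hyy : ∀ x ∈ Ioo (-1 : ℝ) 1, ∀ y ∈ Ioo (0 : ℝ) 1, HasDerivAt (fun t => ψy x t) (ψyy x y) y)
    (hlap : ∀ x ∈ Ioo (-1 : ℝ) 1, ∀ y ∈ Ioo (0 : ℝ) 1, ψxx x y + ψyy x y < 0)
    (hb : ∀ x ∈ Icc (-1 : ℝ) 1, ∀ y ∈ Icc (0 : ℝ) 1, (x = -1 ∨ x = 1 ∨ y = 0 ∨ y = 1) → 0 ≤ ψ x y) :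
    ∀ x ∈ Icc (-1 : ℝ) 1, ∀ y ∈ Icc (0 : ℝ) 1, 0 ≤ ψ x y := by
  obtain ⟨⟨x0, y0⟩, ⟨hx0, hy0⟩, hm⟩ := (isCompact_Icc.prod isCompact_Icc).exists_isMinOn
    (⟨(0, 0), by simp⟩ : (Icc (-1 : ℝ) 1 ×ˢ Icc (0 : ℝ) 1).Nonempty) hc
  simp only at hx0 hy0
  have hm' : ∀ x ∈ Icc (-1 : ℝ) 1, ∀ y ∈ Icc (0 : ℝ) 1, ψ x0 y0 ≤ ψ x y := fun x hx y hy =>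
    hm (show (x, y) ∈ Icc (-1 : ℝ) 1 ×ˢ Icc (0 : ℝ) 1 from ⟨hx, hy⟩)
  suffices 0 ≤ ψ x0 y0 from fun x hx y hy => this.trans (hm' x hx y hy)
  by_cases hbd : x0 = -1 ∨ x0 = 1 ∨ y0 = 0 ∨ y0 = 1
  · exact hb x0 hx0 y0 hy0 hbd
  exfalso
  push Not at hbd
  obtain ⟨b1, b2, b3, b4⟩ := hbd
  have ix : x0 ∈ Ioo (-1 : ℝ) 1 := ⟨lt_of_le_of_ne hx0.1 (Ne.symm b1), lt_of_le_of_ne hx0.2 b2⟩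
  have iy : y0 ∈ Ioo (0 : ℝ) 1 := ⟨lt_of_le_of_ne hy0.1 (Ne.symm b3), lt_of_le_of_ne hy0.2 b4⟩
  have nx : ∀ᶠ t in 𝓝 x0, t ∈ Ioo (-1 : ℝ) 1 := isOpen_Ioo.mem_nhds ix
  have ny : ∀ᶠ t in 𝓝 y0, t ∈ Ioo (0 : ℝ) 1 := isOpen_Ioo.mem_nhds iy
  have h1 : 0 ≤ ψxx x0 y0 := aux_localMin (f := fun t => ψ t y0) (f' := fun t => ψx t y0)
    (x := x0) (nx.mono fun t ht => hm' t ⟨ht.1.le, ht.2.le⟩ y0 hy0)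
    (nx.mono fun t ht => hx t ht y0 iy) (hxx x0 ix y0 iy)
  have h2 : 0 ≤ ψyy x0 y0 := aux_localMin (f := fun t => ψ x0 t) (f' := fun t => ψy x0 t)
    (x := y0) (ny.mono fun t ht => hm' x0 hx0 t ⟨ht.1.le, ht.2.le⟩)
    (ny.mono fun t ht => hy x0 ix t ht) (hyy x0 ix y0 iy)
  linarith [hlap x0 ix y0 iy]

theorem aux_deriv_bound {f : ℝ → ℝ} {c C : ℝ} (hf : HasDerivAt f c 0) (h0 : f 0 = 0)
    (hb : ∀ y ∈ Icc (0 : ℝ) 1, |f y| ≤ C * y) : |c| ≤ C := by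
  have h1 := (hasDerivAt_iff_tendsto_slope.1 hf).abs
  have h2 : Tendsto (fun y => |slope f 0 y|) (𝓝[>] (0:ℝ)) (𝓝 |c|) :=
    h1.mono_left (nhdsWithin_mono _ (fun y hy => ne_of_gt hy))
  refine le_of_tendsto h2 ?_
  filter_upwards [Ioo_mem_nhdsGT (zero_lt_one' ℝ)] with y hy
  rw [slope_def_field, h0, sub_zero, sub_zero, abs_div, abs_of_pos hy.1, div_le_iff₀ hy.1]
  exact hb y ⟨hy.1.le, hy.2.le⟩

theorem aux_gradient (V Vx Vy Vxx Vyy : ℝ → ℝ → ℝ) (x0 y0 ε : ℝ) (hε : 0 < ε)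
    (hc : ContinuousOn (fun p : ℝ × ℝ => V p.1 p.2) (Icc (x0 - 1) (x0 + 1) ×ˢ Icc (y0 - 1) (y0 + 1)))
    (hx : ∀ x ∈ Icc (x0 - 1) (x0 + 1), ∀ y ∈ Icc (y0 - 1) (y0 + 1), HasDerivAt (fun t => V t y) (Vx x y) x)
    (hxx : ∀ x ∈ Icc (x0 - 1) (x0 + 1), ∀ y ∈ Icc (y0 - 1) (y0 + 1), HasDerivAt (fun t => Vx t y) (Vxx x y) x)
    (hy : ∀ x ∈ Icc (x0 - 1) (x0 + 1), ∀ y ∈ Icc (y0 - 1) (y0 + 1), HasDerivAt (fun t => V x t) (Vy x y) y)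
    (hyy : ∀ x ∈ Icc (x0 - 1) (x0 + 1), ∀ y ∈ Icc (y0 - 1) (y0 + 1), HasDerivAt (fun t => Vy x t) (Vyy x y) y)
    (hlap : ∀ x ∈ Icc (x0 - 1) (x0 + 1), ∀ y ∈ Icc (y0 - 1) (y0 + 1), |Vxx x y + Vyy x y| ≤ ε)
    (hosc : ∀ x ∈ Icc (x0 - 1) (x0 + 1), ∀ y ∈ Icc (y0 - 1) (y0 + 1),
      ∀ y' ∈ Icc (y0 - 1) (y0 + 1), |V x y - V x y'| ≤ ε) :
    |Vy x0 y0| ≤ 2 * ε := by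
  have mx : ∀ {x : ℝ}, x ∈ Icc (-1 : ℝ) 1 → x0 + x ∈ Icc (x0 - 1) (x0 + 1) := fun h =>
    ⟨by linarith [h.1], by linarith [h.2]⟩
  have my : ∀ {y : ℝ}, y ∈ Icc (0 : ℝ) 1 → y0 + y ∈ Icc (y0 - 1) (y0 + 1) := fun h =>
    ⟨by linarith [h.1], by linarith [h.2]⟩
  have my' : ∀ {y : ℝ}, y ∈ Icc (0 : ℝ) 1 → y0 - y ∈ Icc (y0 - 1) (y0 + 1) := fun h =>
    ⟨by linarith [h.2], by linarith [h.1]⟩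
  -- the main comparison, with a sign
  have main : ∀ σ : ℝ, |σ| = 1 → ∀ y ∈ Icc (0 : ℝ) 1,
      0 ≤ 2 * ε * y + σ * ((V x0 (y0 + y) - V x0 (y0 - y)) / 2) := by
    intro σ hσ y hy01
    have key := aux_maxprinciple
      (fun x y => ε / 2 * (x ^ 2 + y * (2 - y)) + ε * (y * (1 - y))
        + σ * ((V (x0 + x) (y0 + y) - V (x0 + x) (y0 - y)) / 2))
      (fun x y => ε / 2 * (2 * x) + σ * ((Vx (x0 + x) (y0 + y) - Vx (x0 + x) (y0 - y)) / 2))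
      (fun x y => ε / 2 * (2 - 2 * y) + ε * (1 - 2 * y)
        + σ * ((Vy (x0 + x) (y0 + y) + Vy (x0 + x) (y0 - y)) / 2))
      (fun x y => ε + σ * ((Vxx (x0 + x) (y0 + y) - Vxx (x0 + x) (y0 - y)) / 2))
      (fun x y => - ε - 2 * ε + σ * ((Vyy (x0 + x) (y0 + y) - Vyy (x0 + x) (y0 - y)) / 2))
      ?_ ?_ ?_ ?_ ?_ ?_ ?_ 0 (by simp) y hy01
    · simp only [add_zero] at key
      nlinarith [hy01.1, mul_nonneg hε.le (sq_nonneg y)]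
    · have c1 : ContinuousOn (fun p : ℝ × ℝ => V (x0 + p.1) (y0 + p.2)) (Icc (-1) 1 ×ˢ Icc 0 1) :=
        hc.comp (f := fun p : ℝ × ℝ => (x0 + p.1, y0 + p.2)) (by fun_prop)
          (fun p hp => ⟨mx hp.1, my hp.2⟩)
      have c2 : ContinuousOn (fun p : ℝ × ℝ => V (x0 + p.1) (y0 - p.2)) (Icc (-1) 1 ×ˢ Icc 0 1) :=
        hc.comp (f := fun p : ℝ × ℝ => (x0 + p.1, y0 - p.2)) (by fun_prop)
          (fun p hp => ⟨mx hp.1, my' hp.2⟩)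
      exact ContinuousOn.add (by fun_prop) (continuousOn_const.mul ((c1.sub c2).div_const 2))
    · intro x hx' y hy'
      have h1 := (hx _ (mx (Ioo_subset_Icc_self hx')) _ (my (Ioo_subset_Icc_self hy'))).comp_const_add x0 x
      have h2 := (hx _ (mx (Ioo_subset_Icc_self hx')) _ (my' (Ioo_subset_Icc_self hy'))).comp_const_add x0 x
      have h3 : HasDerivAt (fun x : ℝ => ε / 2 * (x ^ 2 + y * (2 - y)) + ε * (y * (1 - y)))
        (ε / 2 * (2 * x)) x := by
        have := (((hasDerivAt_pow 2 x).add_const (y * (2 - y))).const_mul (ε / 2)).add_const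
          (ε * (y * (1 - y)))
        simpa using this
      exact h3.add (((h1.sub h2).div_const 2).const_mul σ)
    · intro x hx' y hy'
      have h1 := (hxx _ (mx (Ioo_subset_Icc_self hx')) _ (my (Ioo_subset_Icc_self hy'))).comp_const_add x0 x
      have h2 := (hxx _ (mx (Ioo_subset_Icc_self hx')) _ (my' (Ioo_subset_Icc_self hy'))).comp_const_add x0 x
      have h3 : HasDerivAt (fun x : ℝ => ε / 2 * (2 * x)) ε x := by
        have := ((hasDerivAt_id x).const_mul (2:ℝ)).const_mul (ε / 2)
        refine this.congr_deriv ?_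
        ring
      exact h3.add (((h1.sub h2).div_const 2).const_mul σ)
    · intro x hx' y hy'
      have h1 := (hy _ (mx (Ioo_subset_Icc_self hx')) _ (my (Ioo_subset_Icc_self hy'))).comp_const_add y0 y
      have h2 := (hy _ (mx (Ioo_subset_Icc_self hx')) _ (my' (Ioo_subset_Icc_self hy'))).comp_const_sub y0 y
      have h3 : HasDerivAt (fun y : ℝ => ε / 2 * (x ^ 2 + y * (2 - y)) + ε * (y * (1 - y)))
        (ε / 2 * (2 - 2 * y) + ε * (1 - 2 * y)) y := by
        have := ((((hasDerivAt_id y).mul ((hasDerivAt_id y).const_sub 2)).const_add (x ^ 2)).const_mul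
          (ε / 2)).add (((hasDerivAt_id y).mul ((hasDerivAt_id y).const_sub 1)).const_mul ε)
        refine this.congr_deriv ?_
        simp only [id]
        ring
      refine (h3.add (((h1.sub h2).div_const 2).const_mul σ)).congr_deriv ?_
      ring
    · intro x hx' y hy'
      have h1 := (hyy _ (mx (Ioo_subset_Icc_self hx')) _ (my (Ioo_subset_Icc_self hy'))).comp_const_add y0 y
      have h2 := (hyy _ (mx (Ioo_subset_Icc_self hx')) _ (my' (Ioo_subset_Icc_self hy'))).comp_const_sub y0 y
      have h3 : HasDerivAt (fun y : ℝ => ε / 2 * (2 - 2 * y) + ε * (1 - 2 * y))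
        (- ε - 2 * ε) y := by
        have := ((((hasDerivAt_id y).const_mul (2:ℝ)).const_sub 2).const_mul
          (ε / 2)).add ((((hasDerivAt_id y).const_mul (2:ℝ)).const_sub 1).const_mul ε)
        refine this.congr_deriv ?_
        ring
      refine (h3.add (((h1.add h2).div_const 2).const_mul σ)).congr_deriv ?_
      ring
    · intro x hx' y hy'
      have h1 := hlap _ (mx (Ioo_subset_Icc_self hx')) _ (my (Ioo_subset_Icc_self hy'))
      have h2 := hlap _ (mx (Ioo_subset_Icc_self hx')) _ (my' (Ioo_subset_Icc_self hy'))
      have h3 : σ = 1 ∨ σ = -1 := by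
        rcases abs_cases σ with h | h
        · left; linarith
        · right; linarith
      rw [abs_le] at h1 h2
      rcases h3 with rfl | rfl <;> linarith [h1.1, h1.2, h2.1, h2.2]
    · intro x hx' y hy' hbd
      have h1 := hosc _ (mx hx') _ (my hy') _ (my' hy')
      have h3 : σ = 1 ∨ σ = -1 := by
        rcases abs_cases σ with h | h
        · left; linarith
        · right; linarith
      rw [abs_le] at h1
      have q1 : 0 ≤ y * (1 - y) := mul_nonneg hy'.1 (by linarith [hy'.2])
      have q2 : 0 ≤ y * (2 - y) := mul_nonneg hy'.1 (by linarith [hy'.2])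
      have q3 : 0 ≤ ε * (y * (1 - y)) := by positivity
      have q4 : -(ε / 2) ≤ σ * ((V (x0 + x) (y0 + y) - V (x0 + x) (y0 - y)) / 2) := by
        rcases h3 with rfl | rfl <;> linarith [h1.1, h1.2]
      have fin : 1 ≤ x ^ 2 + y * (2 - y) → 0 ≤ ε / 2 * (x ^ 2 + y * (2 - y)) + ε * (y * (1 - y))
        + σ * ((V (x0 + x) (y0 + y) - V (x0 + x) (y0 - y)) / 2) := by
        intro h
        nlinarith
      rcases hbd with rfl | rfl | rfl | rfl
      · exact fin (by nlinarith)
      · exact fin (by nlinarith)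
      · simp only [add_zero, sub_zero, sub_self, zero_div, mul_zero, zero_mul]
        positivity
      · exact fin (by nlinarith [sq_nonneg x])
  have hd : HasDerivAt (fun y => (V x0 (y0 + y) - V x0 (y0 - y)) / 2) (Vy x0 y0) 0 := by
    have hx0 : x0 ∈ Icc (x0 - 1) (x0 + 1) := ⟨by linarith, by linarith⟩
    have hy0 : y0 ∈ Icc (y0 - 1) (y0 + 1) := ⟨by linarith, by linarith⟩
    have h0 := hy x0 hx0 y0 hy0
    have h1 := HasDerivAt.comp_const_add (f := fun t => V x0 t) (f' := Vy x0 y0) y0 0 (by simpa using h0)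
    have h2 := HasDerivAt.comp_const_sub (f := fun t => V x0 t) (f' := Vy x0 y0) y0 0 (by simpa using h0)
    refine ((h1.sub h2).div_const 2).congr_deriv ?_
    ring
  refine aux_deriv_bound hd (by simp) (fun y hy' => ?_)
  have a1 := main 1 (by simp) y hy'
  have a2 := main (-1) (by simp) y hy'
  rw [abs_le]
  constructor <;> linarith

end gradient

section calculus

/-- Logarithmic radial derivative. -/
noncomputable def lgr (f : ℂ → ℝ) (z : ℂ) : ℝ := z.re * pdx f z + z.im * pdy f z

/-- Polar coordinates with logarithmic radius. -/
noncomputable def plr (ρ s : ℝ) : ℂ := ((Real.exp ρ : ℝ) : ℂ) * Complex.exp ((s : ℝ) * Complex.I)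

theorem isOpen_PDisc : IsOpen PDisc := by
  have h1 : IsOpen {z : ℂ | 0 < ‖z‖} := isOpen_lt continuous_const continuous_norm
  have h2 : IsOpen {z : ℂ | ‖z‖ < 1} := isOpen_lt continuous_norm continuous_const
  exact h1.inter h2

theorem norm_plr (ρ s : ℝ) : ‖plr ρ s‖ = Real.exp ρ := by
  rw [plr, norm_mul, Complex.norm_exp_ofReal_mul_I, mul_one, Complex.norm_real, Real.norm_eq_abs,
    abs_of_pos (Real.exp_pos _)]

theorem plr_mem {ρ : ℝ} (hρ : ρ < 0) (s : ℝ) : plr ρ s ∈ PDisc := by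
  refine ⟨?_, ?_⟩
  · rw [norm_plr]; exact Real.exp_pos _
  · rw [norm_plr]; simpa using hρ

theorem continuous_plr : Continuous (fun p : ℝ × ℝ => plr p.1 p.2) := by
  unfold plr
  fun_prop

theorem plr_two_pi (ρ : ℝ) : plr ρ (2 * π) = plr ρ 0 := by
  simp [plr, Complex.exp_two_pi_mul_I]

theorem hasDerivAt_plr_rho (ρ s : ℝ) : HasDerivAt (fun t => plr t s) (plr ρ s) ρ := by
  unfold plr
  exact ((Real.hasDerivAt_exp ρ).ofReal_comp).mul_const _

theorem hasDerivAt_plr_s (ρ s : ℝ) : HasDerivAt (fun t => plr ρ t) (plr ρ s * Complex.I) s := by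
  unfold plr
  have h1 : HasDerivAt (fun t : ℝ => ((t : ℝ) : ℂ) * Complex.I) Complex.I s := by
    simpa using (Complex.ofRealCLM.hasDerivAt (x := s)).mul_const Complex.I
  refine (h1.cexp.const_mul _).congr_deriv ?_
  ring

theorem pdx_hasDerivAt {f : ℂ → ℝ} {z : ℂ} (hf : DifferentiableAt ℝ f z) :
    HasDerivAt (fun t : ℝ => f (z + t)) (fderiv ℝ f z 1) 0 := by
  have h1 : HasDerivAt (fun t : ℝ => z + (t : ℂ)) 1 0 := by
    simpa using (Complex.ofRealCLM.hasDerivAt (x := 0)).const_add z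
  have h2 : HasFDerivAt f (fderiv ℝ f z) (z + ((0:ℝ) : ℂ)) := by simpa using hf.hasFDerivAt
  exact h2.comp_hasDerivAt (0:ℝ) h1

theorem pdy_hasDerivAt {f : ℂ → ℝ} {z : ℂ} (hf : DifferentiableAt ℝ f z) :
    HasDerivAt (fun t : ℝ => f (z + t * Complex.I)) (fderiv ℝ f z Complex.I) 0 := by
  have h1 : HasDerivAt (fun t : ℝ => z + (t : ℂ) * Complex.I) Complex.I 0 := by
    simpa using ((Complex.ofRealCLM.hasDerivAt (x := 0)).mul_const Complex.I).const_add z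
  have h2 : HasFDerivAt f (fderiv ℝ f z) (z + ((0:ℝ) : ℂ) * Complex.I) := by simpa using hf.hasFDerivAt
  exact h2.comp_hasDerivAt (0:ℝ) h1

theorem pdx_eq {f : ℂ → ℝ} {z : ℂ} (hf : DifferentiableAt ℝ f z) :
    pdx f z = fderiv ℝ f z 1 := (pdx_hasDerivAt hf).deriv

theorem pdy_eq {f : ℂ → ℝ} {z : ℂ} (hf : DifferentiableAt ℝ f z) :
    pdy f z = fderiv ℝ f z Complex.I := (pdy_hasDerivAt hf).deriv

theorem fderiv_pd {f : ℂ → ℝ} {z : ℂ} (hf : DifferentiableAt ℝ f z) (w : ℂ) :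
    fderiv ℝ f z w = w.re * pdx f z + w.im * pdy f z := by
  rw [pdx_eq hf, pdy_eq hf]
  conv_lhs => rw [show w = w.re • (1:ℂ) + w.im • Complex.I by
    simp [Complex.re_add_im]]
  rw [map_add, map_smul, map_smul]
  simp

theorem plr_deriv_rho {f : ℂ → ℝ} (ρ s : ℝ) (hf : DifferentiableAt ℝ f (plr ρ s)) :
    HasDerivAt (fun t => f (plr t s)) (lgr f (plr ρ s)) ρ := by
  refine (hf.hasFDerivAt.comp_hasDerivAt ρ (hasDerivAt_plr_rho ρ s)).congr_deriv ?_
  rw [fderiv_pd hf, lgr]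

theorem plr_deriv_s {f : ℂ → ℝ} (ρ s : ℝ) (hf : DifferentiableAt ℝ f (plr ρ s)) :
    HasDerivAt (fun t => f (plr ρ t)) (pdθ f (plr ρ s)) s := by
  refine (hf.hasFDerivAt.comp_hasDerivAt s (hasDerivAt_plr_s ρ s)).congr_deriv ?_
  rw [fderiv_pd hf, pdθ]
  simp

theorem contDiffOn_fderiv_apply {f : ℂ → ℝ} (hf : ContDiffOn ℝ 2 f PDisc) (w : ℂ) :
    ContDiffOn ℝ 1 (fun z => fderiv ℝ f z w) PDisc :=
  (hf.fderiv_of_isOpen isOpen_PDisc (by norm_num)).clm_apply contDiffOn_const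

theorem diffAt_of {f : ℂ → ℝ} {n : WithTop ℕ∞} (hn : n ≠ 0) (hf : ContDiffOn ℝ n f PDisc) {z : ℂ} (hz : z ∈ PDisc) :
    DifferentiableAt ℝ f z :=
  (hf.contDiffAt (isOpen_PDisc.mem_nhds hz)).differentiableAt hn

theorem contDiffOn_pdx {f : ℂ → ℝ} (hf : ContDiffOn ℝ 2 f PDisc) : ContDiffOn ℝ 1 (pdx f) PDisc :=
  (contDiffOn_fderiv_apply hf 1).congr fun _ hz => pdx_eq (diffAt_of (by norm_num) hf hz)

theorem contDiffOn_pdy {f : ℂ → ℝ} (hf : ContDiffOn ℝ 2 f PDisc) : ContDiffOn ℝ 1 (pdy f) PDisc :=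
  (contDiffOn_fderiv_apply hf Complex.I).congr fun _ hz => pdy_eq (diffAt_of (by norm_num) hf hz)

theorem contDiff_re' : ContDiff ℝ 1 (fun z : ℂ => z.re) := Complex.reCLM.contDiff
theorem contDiff_im' : ContDiff ℝ 1 (fun z : ℂ => z.im) := Complex.imCLM.contDiff

theorem contDiffOn_lgr {f : ℂ → ℝ} (hf : ContDiffOn ℝ 2 f PDisc) : ContDiffOn ℝ 1 (lgr f) PDisc :=
  (contDiff_re'.contDiffOn.mul (contDiffOn_pdx hf)).add
    (contDiff_im'.contDiffOn.mul (contDiffOn_pdy hf))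

theorem contDiffOn_pdθ {f : ℂ → ℝ} (hf : ContDiffOn ℝ 2 f PDisc) : ContDiffOn ℝ 1 (pdθ f) PDisc :=
  (contDiff_im'.neg.contDiffOn.mul (contDiffOn_pdx hf)).add
    (contDiff_re'.contDiffOn.mul (contDiffOn_pdy hf))

theorem contOn_pdx {f : ℂ → ℝ} (hf : ContDiffOn ℝ 1 f PDisc) : ContinuousOn (pdx f) PDisc :=
  ((hf.continuousOn_fderiv_of_isOpen isOpen_PDisc le_rfl).clm_apply continuousOn_const).congr
    fun _ hz => pdx_eq (diffAt_of (by norm_num) hf hz)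

theorem contOn_pdy {f : ℂ → ℝ} (hf : ContDiffOn ℝ 1 f PDisc) : ContinuousOn (pdy f) PDisc :=
  ((hf.continuousOn_fderiv_of_isOpen isOpen_PDisc le_rfl).clm_apply continuousOn_const).congr
    fun _ hz => pdy_eq (diffAt_of (by norm_num) hf hz)

theorem contOn_lgr {f : ℂ → ℝ} (hf : ContDiffOn ℝ 1 f PDisc) : ContinuousOn (lgr f) PDisc :=
  (Complex.continuous_re.continuousOn.mul (contOn_pdx hf)).add
    (Complex.continuous_im.continuousOn.mul (contOn_pdy hf))

theorem contOn_pdθ {f : ℂ → ℝ} (hf : ContDiffOn ℝ 1 f PDisc) : ContinuousOn (pdθ f) PDisc :=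
  (Complex.continuous_im.neg.continuousOn.mul (contOn_pdx hf)).add
    (Complex.continuous_re.continuousOn.mul (contOn_pdy hf))

theorem pd_symm {f : ℂ → ℝ} (hf : ContDiffOn ℝ 2 f PDisc) {z : ℂ} (hz : z ∈ PDisc) :
    pdx (pdy f) z = pdy (pdx f) z := by
  have hn := isOpen_PDisc.mem_nhds hz
  have e1 : pdy f =ᶠ[𝓝 z] fun w => fderiv ℝ f w Complex.I := by
    filter_upwards [hn] with w hw using pdy_eq (diffAt_of (by norm_num) hf hw)
  have e2 : pdx f =ᶠ[𝓝 z] fun w => fderiv ℝ f w 1 := by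
    filter_upwards [hn] with w hw using pdx_eq (diffAt_of (by norm_num) hf hw)
  have hd : DifferentiableAt ℝ (fderiv ℝ f) z :=
    ((hf.fderiv_of_isOpen isOpen_PDisc (m := 1) (by norm_num)).contDiffAt hn).differentiableAt
      (by norm_num)
  have hs : IsSymmSndFDerivAt ℝ f z := (hf.contDiffAt hn).isSymmSndFDerivAt (by simp)
  rw [pdx_eq (diffAt_of (by norm_num) (contDiffOn_pdy hf) hz),
    pdy_eq (diffAt_of (by norm_num) (contDiffOn_pdx hf) hz), e1.fderiv_eq, e2.fderiv_eq,
    fderiv_clm_apply hd (differentiableAt_const _), fderiv_clm_apply hd (differentiableAt_const _)]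
  simp
  exact hs.eq 1 Complex.I

/-- First derivatives of `α f + β g` with `α, β` linear. -/
theorem pd_mul {f g : ℂ → ℝ} {z : ℂ} (hf : DifferentiableAt ℝ f z) (hg : DifferentiableAt ℝ g z) :
    pdx (fun w => w.re * f w + w.im * g w) z = f z + z.re * pdx f z + z.im * pdx g z ∧
    pdy (fun w => w.re * f w + w.im * g w) z = z.re * pdy f z + g z + z.im * pdy g z := by
  have hr : HasFDerivAt (fun w : ℂ => w.re) Complex.reCLM z := Complex.reCLM.hasFDerivAt
  have hi : HasFDerivAt (fun w : ℂ => w.im) Complex.imCLM z := Complex.imCLM.hasFDerivAt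
  have h := (hr.mul hf.hasFDerivAt).add (hi.mul hg.hasFDerivAt)
  rw [pdx_eq hf, pdx_eq hg, pdy_eq hf, pdy_eq hg]
  constructor
  · refine (pdx_eq h.differentiableAt).trans ?_
    rw [h.fderiv]
    simp
    ring
  · refine (pdy_eq h.differentiableAt).trans ?_
    rw [h.fderiv]
    simp
    ring

theorem pd_lgr {f : ℂ → ℝ} (hf : ContDiffOn ℝ 2 f PDisc) {z : ℂ} (hz : z ∈ PDisc) :
    pdx (lgr f) z = pdx f z + z.re * pdx (pdx f) z + z.im * pdx (pdy f) z ∧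
    pdy (lgr f) z = z.re * pdy (pdx f) z + pdy f z + z.im * pdy (pdy f) z :=
  pd_mul (diffAt_of (by norm_num) (contDiffOn_pdx hf) hz)
    (diffAt_of (by norm_num) (contDiffOn_pdy hf) hz)

theorem pd_neg (f : ℂ → ℝ) (z : ℂ) : pdx (fun w => - f w) z = - pdx f z ∧
    pdy (fun w => - f w) z = - pdy f z := by
  constructor
  · unfold pdx; exact deriv.fun_neg
  · unfold pdy; exact deriv.fun_neg

theorem pd_pdθ {f : ℂ → ℝ} (hf : ContDiffOn ℝ 2 f PDisc) {z : ℂ} (hz : z ∈ PDisc) :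
    pdx (pdθ f) z = pdy f z + z.re * pdx (pdy f) z - z.im * pdx (pdx f) z ∧
    pdy (pdθ f) z = z.re * pdy (pdy f) z - pdx f z - z.im * pdy (pdx f) z := by
  have h := pd_mul (f := pdy f) (g := fun w => - pdx f w) (z := z)
    (diffAt_of (by norm_num) (contDiffOn_pdy hf) hz)
    (diffAt_of (by norm_num) (contDiffOn_pdx hf) hz).fun_neg
  have e : pdθ f = fun w => w.re * pdy f w + w.im * (- pdx f w) := by
    funext w; unfold pdθ; ring
  rw [e, h.1, h.2, (pd_neg _ _).1, (pd_neg _ _).2]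
  constructor <;> ring

theorem lgr_comm {f : ℂ → ℝ} (hf : ContDiffOn ℝ 2 f PDisc) {z : ℂ} (hz : z ∈ PDisc) :
    lgr (pdθ f) z = pdθ (lgr f) z := by
  rw [lgr, (pd_pdθ hf hz).1, (pd_pdθ hf hz).2]
  conv_rhs => rw [pdθ, (pd_lgr hf hz).1, (pd_lgr hf hz).2]
  rw [pd_symm hf hz]
  ring

theorem lgr_lap {f : ℂ → ℝ} (hf : ContDiffOn ℝ 2 f PDisc) {z : ℂ} (hz : z ∈ PDisc) :
    lgr (lgr f) z + pdθ (pdθ f) z = ‖z‖ ^ 2 * lap f z := by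
  rw [lgr, pdθ, (pd_lgr hf hz).1, (pd_lgr hf hz).2, (pd_pdθ hf hz).1, (pd_pdθ hf hz).2, lap,
    ← Complex.normSq_eq_norm_sq, Complex.normSq_apply]
  ring

end calculus

section matrices

/-- Angular matrix. -/
noncomputable def Lmat (e A B p q : ℝ) : Matrix (Fin 2) (Fin 2) ℝ :=
  !![-(e * B - q) / 2, (e * A - p) / 2; (e * A + p) / 2, (e * B + q) / 2]

/-- Radial matrix. -/
noncomputable def Rmat (e A B p q : ℝ) : Matrix (Fin 2) (Fin 2) ℝ :=
  !![-(e * A - p) / 2, -(e * B - q) / 2; -(e * B + q) / 2, (e * A + p) / 2]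

noncomputable def Lmat' (e A B p q A1 B1 p1 q1 : ℝ) : Matrix (Fin 2) (Fin 2) ℝ :=
  !![-(e * p * B + e * B1 - q1) / 2, (e * p * A + e * A1 - p1) / 2;
     (e * p * A + e * A1 + p1) / 2, (e * p * B + e * B1 + q1) / 2]

noncomputable def Rmat' (e A B p q A2 B2 p2 q2 : ℝ) : Matrix (Fin 2) (Fin 2) ℝ :=
  !![-(e * q * A + e * A2 - p2) / 2, -(e * q * B + e * B2 - q2) / 2;
     -(e * q * B + e * B2 + q2) / 2, (e * q * A + e * A2 + p2) / 2]

theorem flat_mat (e A B p q A1 B1 p1 q1 A2 B2 p2 q2 : ℝ) (h1 : B1 = A2) (h2 : A1 + B2 = 0)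
    (h3 : q1 = p2) (h4 : p1 + q2 = (A ^ 2 + B ^ 2) * e ^ 2) :
    Lmat' e A B p q A1 B1 p1 q1 + Lmat e A B p q * Rmat e A B p q
      = Rmat' e A B p q A2 B2 p2 q2 + Rmat e A B p q * Lmat e A B p q := by
  subst h1 h3
  obtain rfl : B2 = - A1 := by linarith
  obtain rfl : q2 = (A ^ 2 + B ^ 2) * e ^ 2 - p1 := by linarith
  unfold Lmat' Rmat' Lmat Rmat
  ext i j
  fin_cases i <;> fin_cases j <;> simp [Matrix.mul_apply, Fin.sum_univ_two] <;> ring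

theorem neg_Mθ (h u : ℂ → ℝ) (a : ℝ) {z : ℂ} (hz : z ∈ PDisc) :
    - Mθ h u a z = Lmat (Real.exp (u z)) (lgr h z) (pdθ h z - a) (lgr u z) (pdθ u z) := by
  have hz' : ‖z‖ ≠ 0 := hz.1.ne'
  unfold Mθ Lmat ω11θ ω11r ω22r ω22θ pdr lgr
  ext i j
  fin_cases i <;> fin_cases j <;> simp <;> field_simp <;> ring

attribute [local instance] Matrix.linftyOpNormedRing Matrix.linftyOpNormedAlgebra

theorem hasDerivAt_mat {M : ℝ → Matrix (Fin 2) (Fin 2) ℝ} {M' : Matrix (Fin 2) (Fin 2) ℝ} {t : ℝ}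
    (h : ∀ i j, HasDerivAt (fun s => M s i j) (M' i j) t) : HasDerivAt M M' t := by
  have e : M = fun s => ∑ i, ∑ j, M s i j • Matrix.single i j (1:ℝ) := by
    funext s
    conv_lhs => rw [Matrix.matrix_eq_sum_single (M s)]
    simp [Matrix.smul_single]
  have e' : M' = ∑ i, ∑ j, M' i j • Matrix.single i j (1:ℝ) := by
    conv_lhs => rw [Matrix.matrix_eq_sum_single M']
    simp [Matrix.smul_single]
  rw [e, e']
  exact HasDerivAt.fun_sum fun i _ => HasDerivAt.fun_sum fun j _ => (h i j).smul_const _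

theorem continuousOn_mat {X : Type*} [TopologicalSpace X] {S : Set X} {M : X → Matrix (Fin 2) (Fin 2) ℝ}
    (h : ∀ i j, ContinuousOn (fun s => M s i j) S) : ContinuousOn M S := by
  have e : M = fun s => ∑ i, ∑ j, M s i j • Matrix.single i j (1:ℝ) := by
    funext s
    conv_lhs => rw [Matrix.matrix_eq_sum_single (M s)]
    simp [Matrix.smul_single]
  rw [e]
  exact continuousOn_finsetSum _ fun i _ => continuousOn_finsetSum _ fun j _ =>
    (h i j).smul continuousOn_const

theorem norm_mat_le {M : Matrix (Fin 2) (Fin 2) ℝ} {c : ℝ} (h : ∀ i j, |M i j| ≤ c) :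
    ‖M‖ ≤ 2 * c := by
  have hc : 0 ≤ c := (abs_nonneg _).trans (h 0 0)
  rw [Matrix.linfty_opNorm_def]
  have : (Finset.univ.sup fun i : Fin 2 => ∑ j : Fin 2, ‖M i j‖₊) ≤ (⟨2 * c, by positivity⟩ : NNReal) := by
    apply Finset.sup_le
    intro i _
    refine NNReal.coe_le_coe.1 ?_
    simp only [Fin.sum_univ_two, NNReal.coe_add, coe_nnnorm, Real.norm_eq_abs]
    show |M i 0| + |M i 1| ≤ 2 * c
    linarith [h i 0, h i 1]
  exact_mod_cast this

theorem trace_le (M : Matrix (Fin 2) (Fin 2) ℝ) : |Matrix.trace M| ≤ 2 * ‖M‖ := by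
  have h : ∀ i, |M i i| ≤ ‖M‖ := by
    intro i
    rw [Matrix.linfty_opNorm_def, ← Real.norm_eq_abs, ← coe_nnnorm, NNReal.coe_le_coe]
    refine le_trans ?_ (Finset.le_sup (f := fun i => ∑ j, ‖M i j‖₊) (Finset.mem_univ i))
    exact Finset.single_le_sum (f := fun j => ‖M i j‖₊) (fun _ _ => zero_le) (Finset.mem_univ i)
  rw [Matrix.trace_fin_two]
  refine (abs_add_le _ _).trans ?_
  linarith [h 0, h 1]

end matrices

section asymptotics

theorem aux_event {P : ℂ → Prop} (hP : ∀ᶠ z in 𝓝[PDisc] 0, P z) :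
    ∃ ρ₀ < 0, ∀ ρ ≤ ρ₀, ∀ s, P (plr ρ s) := by
  rw [eventually_nhdsWithin_iff, Metric.eventually_nhds_iff] at hP
  obtain ⟨ε, hε, H⟩ := hP
  refine ⟨min (-1) (Real.log ε - 1), by simp, fun ρ hρ s => ?_⟩
  have h1 : ρ ≤ -1 := hρ.trans (min_le_left _ _)
  have h2 : ρ ≤ Real.log ε - 1 := hρ.trans (min_le_right _ _)
  refine H ?_ (plr_mem (by linarith) s)
  rw [dist_zero_right, norm_plr, ← Real.lt_log_iff_exp_lt hε]
  linarith

theorem aux_pde {a : ℝ} {h u : ℂ → ℝ} (hu : ContDiffOn ℝ 2 u PDisc)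
    (hpde : ∀ z ∈ PDisc, lap u z
      = ((pdx h z + a * z.im / ‖z‖ ^ 2) ^ 2 + (pdy h z - a * z.re / ‖z‖ ^ 2) ^ 2)
        * Real.exp (2 * u z)) {z : ℂ} (hz : z ∈ PDisc) :
    lgr (lgr u) z + pdθ (pdθ u) z
      = ((lgr h z) ^ 2 + (pdθ h z - a) ^ 2) * (Real.exp (u z)) ^ 2 := by
  rw [lgr_lap hu hz, hpde z hz, two_mul (u z), Real.exp_add]
  have h0 : ‖z‖ ^ 2 ≠ 0 := pow_ne_zero _ hz.1.ne'
  have e : ‖z‖ ^ 2 = z.re ^ 2 + z.im ^ 2 := by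
    rw [← Complex.normSq_eq_norm_sq, Complex.normSq_apply]; ring
  unfold lgr pdθ
  rw [e] at h0 ⊢
  field_simp
  ring

theorem aux_coeff {a : ℝ} {h : ℂ → ℝ} {N : ℤ} {G : ℂ → ℂ}
    (hGhol : DifferentiableOn ℂ G (Metric.ball (0 : ℂ) 1))
    (hord : ∀ z ∈ PDisc, (pdx h z : ℂ) - (pdy h z : ℂ) * Complex.I = z ^ N * G z)
    {n : ℤ} (hn : n = if a = 0 then N else min (-1) N) :
    ∃ C > 0, ∃ ρ₀ < 0, ∀ ρ ≤ ρ₀, ∀ s, |lgr h (plr ρ s)| ≤ C * Real.exp (((n : ℝ) + 1) * ρ) ∧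
      |pdθ h (plr ρ s) - a| ≤ C * Real.exp (((n : ℝ) + 1) * ρ) := by
  have hGc : ContinuousAt G 0 :=
    (hGhol.differentiableAt (Metric.ball_mem_nhds 0 one_pos)).continuousAt
  have hGb : ∀ᶠ z in 𝓝[PDisc] 0, ‖G z‖ ≤ ‖G 0‖ + 1 := by
    have : ∀ᶠ z in 𝓝 0, ‖G z‖ < ‖G 0‖ + 1 := hGc.norm.eventually_lt_const (by linarith)
    exact (this.filter_mono nhdsWithin_le_nhds).mono fun _ h => h.le
  obtain ⟨ρ₀, hρ₀, H⟩ := aux_event hGb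
  refine ⟨‖G 0‖ + 1 + |a|, by positivity, ρ₀, hρ₀, fun ρ hρ s => ?_⟩
  have hρ0 : ρ < 0 := by linarith
  set z := plr ρ s with hz
  have hzm : z ∈ PDisc := plr_mem hρ0 s
  have hz0 : z ≠ 0 := norm_pos_iff.1 hzm.1
  have hF : (lgr h z : ℂ) - (pdθ h z : ℂ) * Complex.I = z ^ (N + 1) * G z := by
    rw [zpow_add₀ hz0, zpow_one, mul_right_comm, ← hord z hzm]
    apply Complex.ext <;> simp [lgr, pdθ] <;> ring
  have hnorm : ‖z ^ (N + 1) * G z‖ ≤ (‖G 0‖ + 1) * Real.exp (((n : ℝ) + 1) * ρ) := by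
    rw [norm_mul, norm_zpow, hz, norm_plr, ← Real.rpow_intCast, ← Real.exp_mul, mul_comm, mul_comm ρ]
    have hnN : n ≤ N := by
      rw [hn]; split_ifs
      · exact le_rfl
      · exact min_le_right _ _
    have hnN' : (n : ℝ) ≤ N := by exact_mod_cast hnN
    have : ((N + 1 : ℤ) : ℝ) * ρ ≤ ((n : ℝ) + 1) * ρ := by
      push_cast
      nlinarith
    gcongr
    exact H ρ hρ s
  have hre : lgr h z = (z ^ (N + 1) * G z).re := by rw [← hF]; simp
  have him : pdθ h z = -(z ^ (N + 1) * G z).im := by rw [← hF]; simp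
  have h1 : |lgr h z| ≤ (‖G 0‖ + 1) * Real.exp (((n : ℝ) + 1) * ρ) := by
    rw [hre]; exact (Complex.abs_re_le_norm _).trans hnorm
  have h2 : |pdθ h z| ≤ (‖G 0‖ + 1) * Real.exp (((n : ℝ) + 1) * ρ) := by
    rw [him, abs_neg]; exact (Complex.abs_im_le_norm _).trans hnorm
  have h3 : |a| ≤ |a| * Real.exp (((n : ℝ) + 1) * ρ) := by
    by_cases ha : a = 0
    · simp [ha]
    · rw [if_neg ha] at hn
      have : n ≤ -1 := hn ▸ min_le_left _ _
      have : (n : ℝ) ≤ -1 := by exact_mod_cast this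
      have : 1 ≤ Real.exp (((n : ℝ) + 1) * ρ) := Real.one_le_exp (by nlinarith)
      nlinarith [abs_nonneg a]
  constructor
  · nlinarith [abs_nonneg a, Real.exp_pos (((n : ℝ) + 1) * ρ)]
  · refine (abs_sub _ _).trans ?_
    linarith

theorem log_plr (ρ s : ℝ) : Real.log ‖plr ρ s‖ = ρ := by rw [norm_plr, Real.log_exp]

/-- From the two cases: smallness and oscillation. -/
theorem aux_cases {u : ℂ → ℝ} {n : ℤ} {β : ℝ}
    (hcase :
      (β < (n : ℝ) + 1 ∧ ∃ c : ℝ,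
        Tendsto (fun z => u z + β * Real.log ‖z‖) (𝓝[PDisc] 0) (𝓝 c)) ∨
      (β = (n : ℝ) + 1 ∧ ∃ c : ℝ,
        Tendsto (fun z => u z + ((n : ℝ) + 1) * Real.log ‖z‖ + Real.log |Real.log ‖z‖|)
          (𝓝[PDisc] 0) (𝓝 c))) :
    (∀ K : ℝ, ∃ ρ₀ < 0, ∀ ρ ≤ ρ₀, ∀ s, u (plr ρ s) + ((n : ℝ) + 1) * ρ ≤ K) ∧
    (∀ ε > 0, ∃ ρ₀ < 0, ∀ ρ ≤ ρ₀, ∀ s, ∀ ρ' ≤ ρ₀, ∀ s', |ρ - ρ'| ≤ 2 →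
      |(u (plr ρ s) + β * ρ) - (u (plr ρ' s') + β * ρ')| ≤ ε) := by
  rcases hcase with ⟨hβ, c, hc⟩ | ⟨hβ, c, hc⟩
  · have ev : ∀ ε > 0, ∃ ρ₀ < 0, ∀ ρ ≤ ρ₀, ∀ s, |u (plr ρ s) + β * ρ - c| ≤ ε := by
      intro ε hε
      obtain ⟨ρ₀, h0, H⟩ := aux_event (hc.eventually (Metric.closedBall_mem_nhds c hε))
      refine ⟨ρ₀, h0, fun ρ hρ s => ?_⟩
      have := H ρ hρ s
      rwa [Real.dist_eq, log_plr] at this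
    constructor
    · intro K
      obtain ⟨ρ₀, h0, H⟩ := ev 1 one_pos
      have hd : 0 < (n : ℝ) + 1 - β := by linarith
      refine ⟨min ρ₀ ((K - c - 1) / ((n : ℝ) + 1 - β)), lt_of_le_of_lt (min_le_left _ _) h0,
        fun ρ hρ s => ?_⟩
      have h1 := (abs_le.1 (H ρ (hρ.trans (min_le_left _ _)) s)).2
      have h2 := hρ.trans (min_le_right _ _)
      rw [le_div_iff₀ hd] at h2
      nlinarith
    · intro ε hε
      obtain ⟨ρ₀, h0, H⟩ := ev (ε / 2) (by positivity)
      refine ⟨ρ₀, h0, fun ρ hρ s ρ' hρ' s' _ => ?_⟩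
      have h1 := abs_le.1 (H ρ hρ s)
      have h2 := abs_le.1 (H ρ' hρ' s')
      rw [abs_le]
      constructor <;> linarith [h1.1, h1.2, h2.1, h2.2]
  · have ev : ∀ ε > 0, ∃ ρ₀ < 0, ∀ ρ ≤ ρ₀, ∀ s, |u (plr ρ s) + β * ρ + Real.log (-ρ) - c| ≤ ε := by
      intro ε hε
      obtain ⟨ρ₀, h0, H⟩ := aux_event (hc.eventually (Metric.closedBall_mem_nhds c hε))
      refine ⟨ρ₀, h0, fun ρ hρ s => ?_⟩
      have := H ρ hρ s
      rwa [Real.dist_eq, log_plr, abs_of_neg (show ρ < 0 by linarith), ← hβ] at this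
    constructor
    · intro K
      obtain ⟨ρ₀, h0, H⟩ := ev 1 one_pos
      refine ⟨min ρ₀ (- Real.exp (c + 1 - K)), lt_of_le_of_lt (min_le_left _ _) h0,
        fun ρ hρ s => ?_⟩
      have h1 := (abs_le.1 (H ρ (hρ.trans (min_le_left _ _)) s)).2
      have h2 := hρ.trans (min_le_right _ _)
      have h3 : c + 1 - K ≤ Real.log (-ρ) := by
        rw [Real.le_log_iff_exp_le (by linarith [Real.exp_pos (c + 1 - K)])]
        linarith
      rw [← hβ]
      linarith
    · intro ε hε
      obtain ⟨ρ₀, h0, H⟩ := ev (ε / 4) (by positivity)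
      refine ⟨min ρ₀ (- (4 / ε)), lt_of_le_of_lt (min_le_left _ _) h0,
        fun ρ hρ s ρ' hρ' s' hd => ?_⟩
      have h1 := abs_le.1 (H ρ (hρ.trans (min_le_left _ _)) s)
      have h2 := abs_le.1 (H ρ' (hρ'.trans (min_le_left _ _)) s')
      have lg : ∀ x y : ℝ, x ≤ -(4 / ε) → y ≤ -(4 / ε) → |x - y| ≤ 2 →
          Real.log (-x) - Real.log (-y) ≤ ε / 2 := by
        intro x y hx hy hxy
        have p4 : 0 < 4 / ε := by positivity
        have hx0 : 0 < -x := by linarith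
        have hy0 : 0 < -y := by linarith
        rw [← Real.log_div hx0.ne' hy0.ne']
        refine (Real.log_le_sub_one_of_pos (div_pos hx0 hy0)).trans ?_
        rw [div_sub_one hy0.ne', div_le_iff₀ hy0]
        have h5 : 4 / ε ≤ -y := by linarith
        rw [div_le_iff₀ hε] at h5
        linarith [(abs_le.1 hxy).1]
      have h3 := lg ρ ρ' (hρ.trans (min_le_right _ _)) (hρ'.trans (min_le_right _ _)) hd
      have h4 := lg ρ' ρ (hρ'.trans (min_le_right _ _)) (hρ.trans (min_le_right _ _))
        (by rwa [abs_sub_comm])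
      rw [abs_le]
      constructor <;> linarith [h1.1, h1.2, h2.1, h2.2]

theorem aux_asym {a : ℝ} {h u : ℂ → ℝ} (hu : ContDiffOn ℝ 2 u PDisc)
    (hpde : ∀ z ∈ PDisc, lap u z
      = ((pdx h z + a * z.im / ‖z‖ ^ 2) ^ 2 + (pdy h z - a * z.re / ‖z‖ ^ 2) ^ 2)
        * Real.exp (2 * u z))
    {n : ℤ} {β : ℝ}
    (hcoef : ∃ C > 0, ∃ ρ₀ < 0, ∀ ρ ≤ ρ₀, ∀ s,
      |lgr h (plr ρ s)| ≤ C * Real.exp (((n : ℝ) + 1) * ρ) ∧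
      |pdθ h (plr ρ s) - a| ≤ C * Real.exp (((n : ℝ) + 1) * ρ))
    (hK : ∀ K : ℝ, ∃ ρ₀ < 0, ∀ ρ ≤ ρ₀, ∀ s, u (plr ρ s) + ((n : ℝ) + 1) * ρ ≤ K)
    (hosc : ∀ ε > 0, ∃ ρ₀ < 0, ∀ ρ ≤ ρ₀, ∀ s, ∀ ρ' ≤ ρ₀, ∀ s', |ρ - ρ'| ≤ 2 →
      |(u (plr ρ s) + β * ρ) - (u (plr ρ' s') + β * ρ')| ≤ ε) :
    ∀ ε > 0, ∃ ρ₀ < 0, ∀ ρ ≤ ρ₀, ∀ s, |lgr u (plr ρ s) + β| ≤ ε ∧ |pdθ u (plr ρ s)| ≤ ε ∧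
      Real.exp (u (plr ρ s)) * |lgr h (plr ρ s)| ≤ ε ∧
      Real.exp (u (plr ρ s)) * |pdθ h (plr ρ s) - a| ≤ ε := by
  -- smallness of the coefficients
  have small : ∀ ε > 0, ∃ ρ₀ < 0, ∀ ρ ≤ ρ₀, ∀ s,
      Real.exp (u (plr ρ s)) * |lgr h (plr ρ s)| ≤ ε ∧
      Real.exp (u (plr ρ s)) * |pdθ h (plr ρ s) - a| ≤ ε := by
    intro ε hε
    obtain ⟨C, hC, ρ₁, h1, H1⟩ := hcoef
    obtain ⟨ρ₂, h2, H2⟩ := hK (Real.log (ε / C))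
    refine ⟨min ρ₁ ρ₂, lt_of_le_of_lt (min_le_left _ _) h1, fun ρ hρ s => ?_⟩
    have k1 := H1 ρ (hρ.trans (min_le_left _ _)) s
    have k2 := H2 ρ (hρ.trans (min_le_right _ _)) s
    have k3 : Real.exp (u (plr ρ s)) * (C * Real.exp (((n : ℝ) + 1) * ρ)) ≤ ε := by
      have := Real.exp_le_exp.2 k2
      rw [Real.exp_add, Real.exp_log (by positivity), le_div_iff₀ hC] at this
      linarith
    exact ⟨(mul_le_mul_of_nonneg_left k1.1 (Real.exp_pos _).le).trans k3,
      (mul_le_mul_of_nonneg_left k1.2 (Real.exp_pos _).le).trans k3⟩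
  intro ε hε
  obtain ⟨ρ₁, h1, H1⟩ := small ε hε
  set η : ℝ := min 1 (ε / 4) with hη
  have hη0 : 0 < η := by positivity
  obtain ⟨ρ₂, h2, H2⟩ := small η hη0
  obtain ⟨ρ₃, h3, H3⟩ := hosc (ε / 2) (by positivity)
  refine ⟨min ρ₁ (min ρ₂ ρ₃ - 2), lt_of_le_of_lt (min_le_left _ _) h1, fun ρ hρ s => ?_⟩
  have hρ1 : ρ ≤ ρ₁ := hρ.trans (min_le_left _ _)
  have hρ2 : ρ + 1 ≤ ρ₂ := by
    have := hρ.trans (min_le_right _ _)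
    linarith [min_le_left ρ₂ ρ₃]
  have hρ3 : ρ + 1 ≤ ρ₃ := by
    have := hρ.trans (min_le_right _ _)
    linarith [min_le_right ρ₂ ρ₃]
  have hneg : ∀ x ∈ Icc (ρ - 1) (ρ + 1), x < 0 := fun x hx => by linarith [hx.2]
  have hmem : ∀ x ∈ Icc (ρ - 1) (ρ + 1), ∀ y, plr x y ∈ PDisc := fun x hx y => plr_mem (hneg x hx) y
  have hlap : ∀ x ∈ Icc (ρ - 1) (ρ + 1), ∀ y,
      |lgr (lgr u) (plr x y) + pdθ (pdθ u) (plr x y)| ≤ ε / 2 := by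
    intro x hx y
    rw [aux_pde hu hpde (hmem x hx y)]
    obtain ⟨k1, k2⟩ := H2 x (by linarith [hx.2]) y
    have e0 := Real.exp_pos (u (plr x y))
    have hη1 : η ≤ 1 := min_le_left _ _
    have hη2 : η ≤ ε / 4 := min_le_right _ _
    have k1' : (Real.exp (u (plr x y)) * |lgr h (plr x y)|) ^ 2 ≤ η := by
      have : 0 ≤ Real.exp (u (plr x y)) * |lgr h (plr x y)| := by positivity
      nlinarith
    have k2' : (Real.exp (u (plr x y)) * |pdθ h (plr x y) - a|) ^ 2 ≤ η := by
      have : 0 ≤ Real.exp (u (plr x y)) * |pdθ h (plr x y) - a| := by positivity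
      nlinarith
    rw [mul_pow, sq_abs] at k1' k2'
    rw [abs_of_nonneg (by positivity)]
    linarith
  have cu : ContinuousOn (fun p : ℝ × ℝ => u (plr p.1 p.2) + β * p.1)
      (Icc (ρ - 1) (ρ + 1) ×ˢ Icc (s - 1) (s + 1)) := by
    refine ContinuousOn.add ?_ (by fun_prop)
    exact hu.continuousOn.comp continuous_plr.continuousOn (fun p hp => hmem p.1 hp.1 p.2)
  have cu' : ContinuousOn (fun p : ℝ × ℝ => u (plr p.2 p.1) + β * p.2)
      (Icc (s - 1) (s + 1) ×ˢ Icc (ρ - 1) (ρ + 1)) :=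
    cu.comp (f := fun p : ℝ × ℝ => (p.2, p.1)) (by fun_prop) (fun p hp => ⟨hp.2, hp.1⟩)
  have dx : ∀ x ∈ Icc (ρ - 1) (ρ + 1), ∀ y,
      HasDerivAt (fun t => u (plr t y) + β * t) (lgr u (plr x y) + β) x := by
    intro x hx y
    refine ((plr_deriv_rho x y (diffAt_of (by norm_num) hu (hmem x hx y))).add
      ((hasDerivAt_id x).const_mul β)).congr_deriv (by simp)
  have dxx : ∀ x ∈ Icc (ρ - 1) (ρ + 1), ∀ y,
      HasDerivAt (fun t => lgr u (plr t y) + β) (lgr (lgr u) (plr x y)) x := by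
    intro x hx y
    exact (plr_deriv_rho x y (diffAt_of (by norm_num) (contDiffOn_lgr hu) (hmem x hx y))).add_const β
  have dy : ∀ x ∈ Icc (ρ - 1) (ρ + 1), ∀ y,
      HasDerivAt (fun t => u (plr x t) + β * x) (pdθ u (plr x y)) y := by
    intro x hx y
    exact (plr_deriv_s x y (diffAt_of (by norm_num) hu (hmem x hx y))).add_const _
  have dyy : ∀ x ∈ Icc (ρ - 1) (ρ + 1), ∀ y,
      HasDerivAt (fun t => pdθ u (plr x t)) (pdθ (pdθ u) (plr x y)) y := by
    intro x hx y
    exact (plr_deriv_s x y (diffAt_of (by norm_num) (contDiffOn_pdθ hu) (hmem x hx y)))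
  have g2 := aux_gradient (fun x y => u (plr x y) + β * x) (fun x y => lgr u (plr x y) + β)
    (fun x y => pdθ u (plr x y)) (fun x y => lgr (lgr u) (plr x y))
    (fun x y => pdθ (pdθ u) (plr x y)) ρ s (ε / 2) (by positivity) cu
    (fun x hx y _ => dx x hx y) (fun x hx y _ => dxx x hx y) (fun x hx y _ => dy x hx y)
    (fun x hx y _ => dyy x hx y) (fun x hx y _ => hlap x hx y)
    (fun x hx y _ y' _ => H3 x (by linarith [hx.2]) y x (by linarith [hx.2]) y' (by simp))
  have g1 := aux_gradient (fun y x => u (plr x y) + β * x) (fun y x => pdθ u (plr x y))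
    (fun y x => lgr u (plr x y) + β) (fun y x => pdθ (pdθ u) (plr x y))
    (fun y x => lgr (lgr u) (plr x y)) s ρ (ε / 2) (by positivity) cu'
    (fun y _ x hx => dy x hx y) (fun y _ x hx => dyy x hx y) (fun y _ x hx => dx x hx y)
    (fun y _ x hx => dxx x hx y) (fun y _ x hx => by rw [add_comm]; exact hlap x hx y)
    (fun y _ x hx x' hx' => H3 x (by linarith [hx.2]) y x' (by linarith [hx'.2]) y (by
      rw [abs_le]; constructor <;> linarith [hx.1, hx.2, hx'.1, hx'.2]))
  exact ⟨by linarith, by linarith, (H1 ρ hρ1 s).1, (H1 ρ hρ1 s).2⟩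

end asymptotics

section final

attribute [local instance] Matrix.linftyOpNormedRing Matrix.linftyOpNormedAlgebra

theorem aux_rotation (β s : ℝ) :
    HasDerivAt (fun s : ℝ => !![Real.cos (β / 2 * s), Real.sin (β / 2 * s);
      -Real.sin (β / 2 * s), Real.cos (β / 2 * s)])
      (Lmat 0 0 0 (-β) 0 * !![Real.cos (β / 2 * s), Real.sin (β / 2 * s);
      -Real.sin (β / 2 * s), Real.cos (β / 2 * s)]) s := by
  have h0 : HasDerivAt (fun s : ℝ => β / 2 * s) (β / 2) s := by
    simpa using (hasDerivAt_id s).const_mul (β / 2)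
  have hc := h0.cos
  have hs := h0.sin
  apply hasDerivAt_mat
  intro i j
  fin_cases i <;> fin_cases j <;> simp [Lmat]
  · exact hc.congr_deriv (by ring)
  · exact hs.congr_deriv (by ring)
  · exact hs.neg.congr_deriv (by ring)
  · exact hc.congr_deriv (by ring)

theorem aux_main (a : ℝ) (h u : ℂ → ℝ)
    (hh : ContDiffOn ℝ 2 h PDisc) (hu : ContDiffOn ℝ 2 u PDisc)
    (hharm : ∀ z ∈ PDisc, lap h z = 0)
    (hpde : ∀ z ∈ PDisc, lap u z
      = ((pdx h z + a * z.im / ‖z‖ ^ 2) ^ 2 + (pdy h z - a * z.re / ‖z‖ ^ 2) ^ 2)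
        * Real.exp (2 * u z))
    (β : ℝ)
    (hasym : ∀ ε > 0, ∃ ρ₀ < 0, ∀ ρ ≤ ρ₀, ∀ s, |lgr u (plr ρ s) + β| ≤ ε ∧
      |pdθ u (plr ρ s)| ≤ ε ∧
      Real.exp (u (plr ρ s)) * |lgr h (plr ρ s)| ≤ ε ∧
      Real.exp (u (plr ρ s)) * |pdθ h (plr ρ s) - a| ≤ ε)
    (Φ : ℝ → ℝ → Matrix (Fin 2) (Fin 2) ℝ)
    (hΦ0 : ∀ ρ < 0, Φ ρ 0 = 1)
    (hΦode : ∀ ρ < 0, ∀ s : ℝ, ∀ i j : Fin 2,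
      HasDerivAt (fun s' => Φ ρ s' i j)
        ((-Mθ h u a (plr ρ s) * Φ ρ s) i j) s) :
    ∀ ρ < 0, Matrix.trace (Φ ρ (2 * π)) = 2 * Real.cos (π * β) := by
  have pi2 : (0 : ℝ) ≤ 2 * π := by positivity
  set L : ℝ → ℝ → Matrix (Fin 2) (Fin 2) ℝ := fun ρ s =>
    Lmat (Real.exp (u (plr ρ s))) (lgr h (plr ρ s)) (pdθ h (plr ρ s) - a) (lgr u (plr ρ s))
      (pdθ u (plr ρ s)) with hL
  set R : ℝ → ℝ → Matrix (Fin 2) (Fin 2) ℝ := fun ρ s =>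
    Rmat (Real.exp (u (plr ρ s))) (lgr h (plr ρ s)) (pdθ h (plr ρ s) - a) (lgr u (plr ρ s))
      (pdθ u (plr ρ s)) with hR
  set L' : ℝ → ℝ → Matrix (Fin 2) (Fin 2) ℝ := fun ρ s =>
    Lmat' (Real.exp (u (plr ρ s))) (lgr h (plr ρ s)) (pdθ h (plr ρ s) - a) (lgr u (plr ρ s))
      (pdθ u (plr ρ s)) (lgr (lgr h) (plr ρ s)) (lgr (pdθ h) (plr ρ s)) (lgr (lgr u) (plr ρ s))
      (lgr (pdθ u) (plr ρ s)) with hL'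
  set R' : ℝ → ℝ → Matrix (Fin 2) (Fin 2) ℝ := fun ρ s =>
    Rmat' (Real.exp (u (plr ρ s))) (lgr h (plr ρ s)) (pdθ h (plr ρ s) - a) (lgr u (plr ρ s))
      (pdθ u (plr ρ s)) (pdθ (lgr h) (plr ρ s)) (pdθ (pdθ h) (plr ρ s)) (pdθ (lgr u) (plr ρ s))
      (pdθ (pdθ u) (plr ρ s)) with hR'
  have hΦ : ∀ ρ < 0, ∀ s, HasDerivAt (Φ ρ) (L ρ s * Φ ρ s) s := by
    intro ρ hρ s
    apply hasDerivAt_mat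
    intro i j
    have := hΦode ρ hρ s i j
    rwa [neg_Mθ h u a (plr_mem hρ s)] at this
  -- differentiability of all ingredients
  have du : ∀ ρ < 0, ∀ s, DifferentiableAt ℝ u (plr ρ s) := fun ρ hρ s =>
    diffAt_of (by norm_num) hu (plr_mem hρ s)
  have d1u : ∀ ρ < 0, ∀ s, DifferentiableAt ℝ (lgr u) (plr ρ s) := fun ρ hρ s =>
    diffAt_of (by norm_num) (contDiffOn_lgr hu) (plr_mem hρ s)
  have d2u : ∀ ρ < 0, ∀ s, DifferentiableAt ℝ (pdθ u) (plr ρ s) := fun ρ hρ s =>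
    diffAt_of (by norm_num) (contDiffOn_pdθ hu) (plr_mem hρ s)
  have d1h : ∀ ρ < 0, ∀ s, DifferentiableAt ℝ (lgr h) (plr ρ s) := fun ρ hρ s =>
    diffAt_of (by norm_num) (contDiffOn_lgr hh) (plr_mem hρ s)
  have d2h : ∀ ρ < 0, ∀ s, DifferentiableAt ℝ (pdθ h) (plr ρ s) := fun ρ hρ s =>
    diffAt_of (by norm_num) (contDiffOn_pdθ hh) (plr_mem hρ s)
  have hLd : ∀ ρ < 0, ∀ s, HasDerivAt (fun ρ => L ρ s) (L' ρ s) ρ := by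
    intro ρ hρ s
    have ke := (plr_deriv_rho ρ s (du ρ hρ s)).exp
    have kA := ke.mul (plr_deriv_rho ρ s (d1h ρ hρ s))
    have kB := ke.mul ((plr_deriv_rho ρ s (d2h ρ hρ s)).sub_const a)
    have kp := plr_deriv_rho ρ s (d1u ρ hρ s)
    have kq := plr_deriv_rho ρ s (d2u ρ hρ s)
    apply hasDerivAt_mat
    intro i j
    fin_cases i <;> fin_cases j <;> simp [hL, hL', Lmat, Lmat']
    · exact ((kB.sub kq).neg.div_const 2).congr_deriv (by ring) |>.congr_of_eventuallyEq
        (Eventually.of_forall fun t => by simp [sub_eq_add_neg, add_comm])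
    · exact (kA.sub kp).div_const 2
    · exact (kA.add kp).div_const 2
    · exact (kB.add kq).div_const 2
  have hRd : ∀ ρ < 0, ∀ s, HasDerivAt (R ρ) (R' ρ s) s := by
    intro ρ hρ s
    have ke := (plr_deriv_s ρ s (du ρ hρ s)).exp
    have kA := ke.mul (plr_deriv_s ρ s (d1h ρ hρ s))
    have kB := ke.mul ((plr_deriv_s ρ s (d2h ρ hρ s)).sub_const a)
    have kp := plr_deriv_s ρ s (d1u ρ hρ s)
    have kq := plr_deriv_s ρ s (d2u ρ hρ s)
    apply hasDerivAt_mat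
    intro i j
    fin_cases i <;> fin_cases j <;> simp [hR, hR', Rmat, Rmat']
    · exact ((kA.sub kp).neg.div_const 2).congr_deriv (by ring) |>.congr_of_eventuallyEq
        (Eventually.of_forall fun t => by simp [sub_eq_add_neg, add_comm])
    · exact ((kB.sub kq).neg.div_const 2).congr_deriv (by ring) |>.congr_of_eventuallyEq
        (Eventually.of_forall fun t => by simp [sub_eq_add_neg, add_comm])
    · exact ((kB.add kq).neg.div_const 2).congr_deriv (by ring) |>.congr_of_eventuallyEq
        (Eventually.of_forall fun t => by simp [add_comm])
    · exact (kA.add kp).div_const 2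
  have comp : ∀ f : ℂ → ℝ, ContinuousOn f PDisc →
      ContinuousOn (fun p : ℝ × ℝ => f (plr p.1 p.2)) {p | p.1 < 0} := fun f hf =>
    hf.comp continuous_plr.continuousOn (fun p hp => plr_mem hp p.2)
  have cu := comp u hu.continuousOn
  have c1u := comp _ (contDiffOn_lgr hu).continuousOn
  have c2u := comp _ (contDiffOn_pdθ hu).continuousOn
  have c1h := comp _ (contDiffOn_lgr hh).continuousOn
  have c2h := comp _ (contDiffOn_pdθ hh).continuousOn
  have c11u := comp _ (contOn_lgr (contDiffOn_lgr hu))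
  have c12u := comp _ (contOn_lgr (contDiffOn_pdθ hu))
  have c11h := comp _ (contOn_lgr (contDiffOn_lgr hh))
  have c12h := comp _ (contOn_lgr (contDiffOn_pdθ hh))
  have ce := Real.continuous_exp.comp_continuousOn cu
  have cB := c2h.sub (continuousOn_const (c := a))
  have hL'c : ContinuousOn (fun p : ℝ × ℝ => L' p.1 p.2) {p | p.1 < 0} := by
    have t1 := ((ce.mul c1u).mul cB).add (ce.mul c12h)
    have t2 := ((ce.mul c1u).mul c1h).add (ce.mul c11h)
    apply continuousOn_mat
    intro i j
    fin_cases i <;> fin_cases j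
    · exact (t1.sub c12u).neg.div_const 2
    · exact (t2.sub c11u).div_const 2
    · exact (t2.add c11u).div_const 2
    · exact (t1.add c12u).div_const 2
  have hLc2 : ContinuousOn (fun p : ℝ × ℝ => L p.1 p.2) {p | p.1 < 0} := by
    apply continuousOn_mat
    intro i j
    fin_cases i <;> fin_cases j
    · exact ((ce.mul cB).sub c2u).neg.div_const 2
    · exact ((ce.mul c1h).sub c1u).div_const 2
    · exact ((ce.mul c1h).add c1u).div_const 2
    · exact ((ce.mul cB).add c2u).div_const 2
  have hLc : ∀ ρ < 0, Continuous (L ρ) := by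
    intro ρ hρ
    rw [← continuousOn_univ]
    exact hLc2.comp (f := fun s : ℝ => (ρ, s)) (by fun_prop) (fun s _ => hρ)
  have hflat : ∀ ρ < 0, ∀ s, L' ρ s + L ρ s * R ρ s = R' ρ s + R ρ s * L ρ s := by
    intro ρ hρ s
    have hz := plr_mem hρ s
    exact flat_mat _ _ _ _ _ _ _ _ _ _ _ _ _ (lgr_comm hh hz)
      (by rw [lgr_lap hh hz, hharm _ hz, mul_zero]) (lgr_comm hu hz) (aux_pde hu hpde hz)
  have htr : ∀ ρ < 0, HasDerivAt (fun ρ => Matrix.trace (Φ ρ (2 * π))) 0 ρ := by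
    intro ρ hρ
    have key := aux_transport Φ L L' R R' (2 * π) pi2 hΦ0 hΦ hLd hRd hL'c hLc hflat ρ hρ
    have hper : R ρ (2 * π) = R ρ 0 := by simp only [hR, plr_two_pi]
    let tr : Matrix (Fin 2) (Fin 2) ℝ →L[ℝ] ℝ :=
      LinearMap.mkContinuous (Matrix.traceLinearMap (Fin 2) ℝ ℝ) 2 (fun M => trace_le M)
    have h2 := tr.hasFDerivAt.comp_hasDerivAt ρ key
    refine h2.congr_deriv ?_
    show Matrix.trace (R ρ (2 * π) * Φ ρ (2 * π) - Φ ρ (2 * π) * R ρ 0) = 0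
    rw [hper, Matrix.trace_sub, Matrix.trace_mul_comm, sub_self]
  have hlim := aux_limit Φ L (fun s : ℝ => !![Real.cos (β / 2 * s), Real.sin (β / 2 * s);
      -Real.sin (β / 2 * s), Real.cos (β / 2 * s)]) (Lmat 0 0 0 (-β) 0) (2 * π) pi2 hΦ0 hΦ
    (by ext i j; fin_cases i <;> fin_cases j <;> simp) (aux_rotation β) (by
      intro ε hε
      obtain ⟨ρ₀, h0, H⟩ := hasym (ε / 2) (by positivity)
      refine ⟨ρ₀, h0, fun ρ hρ s => ?_⟩
      obtain ⟨k1, k2, k3, k4⟩ := H ρ hρ s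
      have e0 := Real.exp_pos (u (plr ρ s))
      rw [← abs_of_pos e0, ← abs_mul] at k3 k4
      rw [abs_le] at k1 k2 k3 k4
      have : ‖L ρ s - Lmat 0 0 0 (-β) 0‖ ≤ 2 * (ε / 2) := by
        apply norm_mat_le
        intro i j
        rw [abs_le]
        fin_cases i <;> fin_cases j <;> simp [hL, Lmat] <;> constructor <;> linarith
      linarith)
  have hconst : ∀ ρ < 0, ∀ ρ' < 0,
      Matrix.trace (Φ ρ (2 * π)) = Matrix.trace (Φ ρ' (2 * π)) := by
    intro ρ hρ ρ' hρ'
    exact isOpen_Iio.is_const_of_deriv_eq_zero (s := Iio (0:ℝ)) isPreconnected_Iio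
      (f := fun ρ => Matrix.trace (Φ ρ (2 * π)))
      (fun x hx => (htr x hx).differentiableAt.differentiableWithinAt)
      (fun x hx => (htr x hx).deriv) hρ hρ'
  intro ρ hρ
  have hfin : ∀ ε > 0, |Matrix.trace (Φ ρ (2 * π)) - 2 * Real.cos (π * β)| ≤ ε := by
    intro ε hε
    obtain ⟨ρ₀, h0, H⟩ := hlim (ε / 2) (by positivity)
    have h1 := H ρ₀ le_rfl
    rw [hconst ρ hρ ρ₀ h0]
    have h2 := trace_le (Φ ρ₀ (2 * π) - !![Real.cos (β / 2 * (2 * π)), Real.sin (β / 2 * (2 * π));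
      -Real.sin (β / 2 * (2 * π)), Real.cos (β / 2 * (2 * π))])
    rw [Matrix.trace_sub, Matrix.trace_fin_two_of] at h2
    rw [show π * β = β / 2 * (2 * π) by ring, two_mul (Real.cos _)]
    linarith
  have h0 : |Matrix.trace (Φ ρ (2 * π)) - 2 * Real.cos (π * β)| ≤ 0 :=
    le_of_forall_pos_le_add (fun ε hε => by simpa using hfin ε hε)
  exact sub_eq_zero.1 (abs_nonpos_iff.1 h0)

end final

theorem stmt17 (a : ℝ) (h u : ℂ → ℝ)
    (hh : ContDiffOn ℝ 2 h PDisc) (hu : ContDiffOn ℝ 2 u PDisc)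
    (hharm : ∀ z ∈ PDisc, lap h z = 0)
    (hpde : ∀ z ∈ PDisc, lap u z
      = ((pdx h z + a * z.im / ‖z‖ ^ 2) ^ 2 + (pdy h z - a * z.re / ‖z‖ ^ 2) ^ 2)
        * Real.exp (2 * u z))
    (N : ℤ) (G : ℂ → ℂ)
    (hGhol : DifferentiableOn ℂ G (Metric.ball (0 : ℂ) 1)) (hG0 : G 0 ≠ 0)
    (hord : ∀ z ∈ PDisc, (pdx h z : ℂ) - (pdy h z : ℂ) * Complex.I = z ^ N * G z)
    (n : ℤ) (hn : n = if a = 0 then N else min (-1) N)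
    (β : ℝ)
    (hcase :
      (β < (n : ℝ) + 1 ∧ ∃ c : ℝ,
        Tendsto (fun z => u z + β * Real.log ‖z‖) (𝓝[PDisc] 0) (𝓝 c)) ∨
      (β = (n : ℝ) + 1 ∧ ∃ c : ℝ,
        Tendsto (fun z => u z + ((n : ℝ) + 1) * Real.log ‖z‖ + Real.log |Real.log ‖z‖|)
          (𝓝[PDisc] 0) (𝓝 c)))
    -- the parallel transport Φ_r along the circle of radius r
    (Φ : ℝ → ℝ → Matrix (Fin 2) (Fin 2) ℝ)
    (hΦ0 : ∀ r ∈ Ioo (0 : ℝ) 1, Φ r 0 = 1)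
    (hΦode : ∀ r ∈ Ioo (0 : ℝ) 1, ∀ s : ℝ, ∀ i j : Fin 2,
      HasDerivAt (fun s' => Φ r s' i j)
        ((-Mθ h u a ((r : ℂ) * Complex.exp ((s : ℝ) * Complex.I)) * Φ r s) i j) s) :
    ∀ r ∈ Ioo (0 : ℝ) 1,
      Matrix.trace (Φ r (2 * π)) = 2 * Real.cos (π * β) := by

  intro r hr
  have hexp : ∀ ρ < 0, Real.exp ρ ∈ Ioo (0 : ℝ) 1 := fun ρ hρ =>
    ⟨Real.exp_pos _, by simpa using hρ⟩
  have hc := aux_cases hcase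
  have key := aux_main a h u hh hu hharm hpde β
    (aux_asym hu hpde (aux_coeff hGhol hord hn) hc.1 hc.2)
    (fun ρ s => Φ (Real.exp ρ) s) (fun ρ hρ => hΦ0 _ (hexp ρ hρ))
    (fun ρ hρ s i j => hΦode _ (hexp ρ hρ) s i j)
    (Real.log r) (Real.log_neg hr.1 hr.2)
  simpa only [Real.exp_log hr.1] using key
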